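/- arXiv:1907.03662 — 2 statements merged into one kernel-verified Lean document; each statement's English description precedes it below -/
import Mathlib

section
/- Let G be a connected simple graph on the vertex set {1,…,n} (n ≥ 2) with non-empty edge set E, let (𝔫_G, ⟨·,·⟩) be the associated real metric Lie algebra, and let T be a Killing–Yano tensor on (𝔫_G, ⟨·,·⟩). Then for any two distinct indices i ≠ k one has ⟨Te_i, e_k⟩ = ⟨Te_i, f_k⟩ = ⟨Tf_i, e_k⟩ = ⟨Tf_i, f_k⟩ = 0; consequently, for each i there exists a_i ∈ ℝ with Te_i = a_i·f_i and Tf_i = −a_i·e_i. -/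
/-- `x` belongs to the center of the Lie algebra `V`. -/
def IsCentral {V : Type*} [LieRing V] (x : V) : Prop := ∀ y : V, ⁅x, y⁆ = 0

/-- Membership in `𝔳 = 𝔷^⊥`, the orthogonal complement of the center with respect to the
inner product `B`. -/
def InVperp {V : Type*} [LieRing V] [LieAlgebra ℝ V]
    (B : V →ₗ[ℝ] V →ₗ[ℝ] ℝ) (x : V) : Prop :=
  ∀ z : V, IsCentral z → B x z = 0

/-- The Lie algebra `V` is 2-step nilpotent: non-abelian and `⁅⁅V,V⁆,V⁆ = 0`. -/
def TwoStepNilpotent (V : Type*) [LieRing V] : Prop :=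
  (∃ x y : V, ⁅x, y⁆ ≠ 0) ∧ ∀ x y z : V, ⁅⁅x, y⁆, z⁆ = 0

/-- A Killing–Yano tensor on `(V, B)`: a skew-symmetric endomorphism preserving the center
and satisfying `T⁅x,y⁆ = 3⁅Tx,y⁆` for `x, y ∈ 𝔳 = 𝔷^⊥`. -/
def IsKY {V : Type*} [LieRing V] [LieAlgebra ℝ V]
    (B : V →ₗ[ℝ] V →ₗ[ℝ] ℝ) (T : V →ₗ[ℝ] V) : Prop :=
  (∀ x y : V, B (T x) y = - B x (T y)) ∧
  (∀ z : V, IsCentral z → IsCentral (T z)) ∧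
  (∀ x y : V, InVperp B x → InVperp B y → T ⁅x, y⁆ = (3 : ℝ) • ⁅T x, y⁆)

/-- The Koszul formula characterizing the Levi-Civita product of `(V, B)`. -/
def IsLeviCivita {V : Type*} [LieRing V] [LieAlgebra ℝ V]
    (B : V →ₗ[ℝ] V →ₗ[ℝ] ℝ) (nab : V → V → V) : Prop :=
  ∀ x y z : V, 2 * B (nab x y) z = B ⁅x, y⁆ z - B ⁅y, z⁆ x + B ⁅z, x⁆ y
/-- for a connected graph G and a KY tensor T on 𝔫_G, T has no
components mixing distinct pairs (e_i, f_i); consequently Te_i = a_i·f_i and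
Tf_i = -a_i·e_i for some a_i ∈ ℝ. -/
theorem statement_18
    (n : ℕ) (hn : 2 ≤ n) (G : SimpleGraph (Fin n))
    (hconn : G.Connected) (hE : G.edgeSet.Nonempty)
    (V : Type*) [LieRing V] [LieAlgebra ℝ V]
    (B : V →ₗ[ℝ] V →ₗ[ℝ] ℝ)
    (hsymm : ∀ x y : V, B x y = B y x) (hpos : ∀ x : V, x ≠ 0 → 0 < B x x)
    (e f : Fin n → V) (z w : G.edgeSet → V)
    -- the basis {e i, f i, z s, w s} is orthonormal
    (hee : ∀ i j, B (e i) (e j) = if i = j then 1 else 0)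
    (hff : ∀ i j, B (f i) (f j) = if i = j then 1 else 0)
    (hzz : ∀ s t, B (z s) (z t) = if s = t then 1 else 0)
    (hww : ∀ s t, B (w s) (w t) = if s = t then 1 else 0)
    (hef : ∀ i j, B (e i) (f j) = 0)
    (hez : ∀ i s, B (e i) (z s) = 0)
    (hew : ∀ i s, B (e i) (w s) = 0)
    (hfz : ∀ i s, B (f i) (z s) = 0)
    (hfw : ∀ i s, B (f i) (w s) = 0)
    (hzw : ∀ s t, B (z s) (w t) = 0)
    -- ... and spans V
    (hspan : Submodule.span ℝ
      (Set.range e ∪ Set.range f ∪ Set.range z ∪ Set.range w) = ⊤)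
    -- the bracket relations of the Lie algebra 𝔫_G
    (hbee : ∀ i j, ∀ h : G.Adj i j, i < j →
        ⁅e i, e j⁆ = z ⟨s(i, j), G.mem_edgeSet.mpr h⟩)
    (hbff : ∀ i j, ∀ h : G.Adj i j, i < j →
        ⁅f i, f j⁆ = -z ⟨s(i, j), G.mem_edgeSet.mpr h⟩)
    (hbef : ∀ i j, ∀ h : G.Adj i j, i < j →
        ⁅e i, f j⁆ = w ⟨s(i, j), G.mem_edgeSet.mpr h⟩)
    (hbfe : ∀ i j, ∀ h : G.Adj i j, i < j →
        ⁅f i, e j⁆ = w ⟨s(i, j), G.mem_edgeSet.mpr h⟩)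
    (hnadj : ∀ i j, ¬ G.Adj i j →
        ⁅e i, e j⁆ = 0 ∧ ⁅e i, f j⁆ = 0 ∧ ⁅f i, e j⁆ = 0 ∧ ⁅f i, f j⁆ = 0)
    (hzc : ∀ s, IsCentral (z s)) (hwc : ∀ s, IsCentral (w s))
    (T : V →ₗ[ℝ] V) (hT : IsKY B T) :
    (∀ i k, i ≠ k →
      B (T (e i)) (e k) = 0 ∧ B (T (e i)) (f k) = 0 ∧
      B (T (f i)) (e k) = 0 ∧ B (T (f i)) (f k) = 0) ∧
    (∀ i, ∃ a : ℝ, T (e i) = a • f i ∧ T (f i) = -(a • e i)) := by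
  classical
  obtain ⟨hskew, hTc, hTb⟩ := hT
  -- generic span induction principle
  have hind : ∀ (φ : V →ₗ[ℝ] ℝ), (∀ i, φ (e i) = 0) → (∀ i, φ (f i) = 0) →
      (∀ s, φ (z s) = 0) → (∀ s, φ (w s) = 0) → ∀ x, φ x = 0 := by
    intro φ h1 h2 h3 h4 x
    have hx : x ∈ Submodule.span ℝ
      (Set.range e ∪ Set.range f ∪ Set.range z ∪ Set.range w) := by
      rw [hspan]; trivial
    have hle : Submodule.span ℝ
      (Set.range e ∪ Set.range f ∪ Set.range z ∪ Set.range w) ≤ LinearMap.ker φ := by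
      rw [Submodule.span_le]
      rintro y (((⟨i, rfl⟩ | ⟨i, rfl⟩) | ⟨i, rfl⟩) | ⟨i, rfl⟩)
      · exact h1 i
      · exact h2 i
      · exact h3 i
      · exact h4 i
    exact hle hx
  -- bracket relations with signs
  let ε : Fin n → Fin n → ℝ := fun i j => if i < j then 1 else -1
  have hε : ∀ i j, ε i j ≠ 0 := by
    intro i j; simp only [ε]; split_ifs <;> norm_num
  have hbr : ∀ i j, ∀ h : G.Adj i j,
      ⁅e i, e j⁆ = ε i j • z ⟨s(i, j), G.mem_edgeSet.mpr h⟩ ∧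
      ⁅f i, f j⁆ = -(ε i j • z ⟨s(i, j), G.mem_edgeSet.mpr h⟩) ∧
      ⁅e i, f j⁆ = ε i j • w ⟨s(i, j), G.mem_edgeSet.mpr h⟩ ∧
      ⁅f i, e j⁆ = ε i j • w ⟨s(i, j), G.mem_edgeSet.mpr h⟩ := by
    intro i j h
    rcases lt_or_gt_of_ne h.ne with hlt | hlt
    · have : ε i j = 1 := by simp [ε, hlt]
      rw [this, one_smul, one_smul]
      exact ⟨hbee i j h hlt, hbff i j h hlt, hbef i j h hlt, hbfe i j h hlt⟩
    · have : ε i j = -1 := by simp [ε, hlt.le]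
      have hs : (⟨s(i, j), G.mem_edgeSet.mpr h⟩ : G.edgeSet) =
          ⟨s(j, i), G.mem_edgeSet.mpr h.symm⟩ := Subtype.ext Sym2.eq_swap
      rw [this, hs, neg_smul, one_smul, neg_smul, one_smul]
      refine ⟨?_, ?_, ?_, ?_⟩
      · rw [← lie_skew, hbee j i h.symm hlt]
      · rw [← lie_skew, hbff j i h.symm hlt]
      · rw [← lie_skew, hbfe j i h.symm hlt]
      · rw [← lie_skew, hbef j i h.symm hlt]
  have hwz : ∀ s t, B (w s) (z t) = 0 := fun s t => by rw [hsymm, hzw]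
  have hfe : ∀ i j, B (f i) (e j) = 0 := fun s t => by rw [hsymm, hef]
  have hze : ∀ s i, B (z s) (e i) = 0 := fun s t => by rw [hsymm, hez]
  have hzf : ∀ s i, B (z s) (f i) = 0 := fun s t => by rw [hsymm, hfz]
  have hwe : ∀ s i, B (w s) (e i) = 0 := fun s t => by rw [hsymm, hew]
  have hwf : ∀ s i, B (w s) (f i) = 0 := fun s t => by rw [hsymm, hfw]
  -- bracket as a linear map in the first slot
  let L : V → V →ₗ[ℝ] V := fun y =>
    { toFun := fun x => ⁅x, y⁆
      map_add' := fun a b => add_lie a b y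
      map_smul' := fun c a => smul_lie c a y }
  have hL : ∀ x y, L y x = ⁅x, y⁆ := fun _ _ => rfl
  have key : ∀ k j, ∀ h : G.Adj k j, ∀ x,
      B ⁅x, e j⁆ (z ⟨s(k, j), G.mem_edgeSet.mpr h⟩) = ε k j * B x (e k) ∧
      B ⁅x, e j⁆ (w ⟨s(k, j), G.mem_edgeSet.mpr h⟩) = ε k j * B x (f k) ∧
      B ⁅x, f j⁆ (z ⟨s(k, j), G.mem_edgeSet.mpr h⟩) = -(ε k j * B x (f k)) := by
    intro k j h x
    have hne := h.ne
    have aux : ∀ (y v : V) (u : V) (c : ℝ),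
        (∀ i, B ⁅e i, y⁆ u = c * B (e i) v) → (∀ i, B ⁅f i, y⁆ u = c * B (f i) v) →
        (∀ s, B (z s) v = 0) → (∀ s, B (w s) v = 0) → B ⁅x, y⁆ u = c * B x v := by
      intro y v u c h1 h2 h3 h4
      have := hind ((B.flip u).comp (L y) - c • B.flip v)
        (fun i => by simp [hL, h1]) (fun i => by simp [hL, h2])
        (fun s => by simp [hL, hzc s y, h3]) (fun s => by simp [hL, hwc s y, h4]) x
      simpa [hL, sub_eq_zero] using this
    have haj : ∀ i, ¬ G.Adj i j → i ≠ k := fun i hi he => hi (he ▸ h)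
    refine ⟨?_, ?_, ?_⟩
    · refine aux _ _ _ _ (fun i => ?_) (fun i => ?_) (fun s => hze s k) (fun s => hwe s k)
      · by_cases hi : G.Adj i j
        · rw [(hbr i j hi).1]
          by_cases hik : i = k
          · subst hik; simp [hzz, hee]
          · simp [hzz, hee, hik, hi.ne]
        · simp [(hnadj i j hi).1, hee, haj i hi]
      · by_cases hi : G.Adj i j
        · rw [(hbr i j hi).2.2.2]; simp [hwz, hfe]
        · simp [(hnadj i j hi).2.2.1, hfe]
    · refine aux _ _ _ _ (fun i => ?_) (fun i => ?_) (fun s => hzf s k) (fun s => hwf s k)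
      · by_cases hi : G.Adj i j
        · rw [(hbr i j hi).1]; simp [hzw, hef]
        · simp [(hnadj i j hi).1, hef]
      · by_cases hi : G.Adj i j
        · rw [(hbr i j hi).2.2.2]
          by_cases hik : i = k
          · subst hik; simp [hww, hff]
          · simp [hww, hff, hik, hi.ne]
        · simp [(hnadj i j hi).2.2.1, hff, haj i hi]
    · rw [← neg_mul]
      refine aux _ _ _ _ (fun i => ?_) (fun i => ?_) (fun s => hzf s k) (fun s => hwf s k)
      · by_cases hi : G.Adj i j
        · rw [(hbr i j hi).2.2.1]; simp [hwz, hef]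
        · simp [(hnadj i j hi).2.1, hef]
      · by_cases hi : G.Adj i j
        · rw [(hbr i j hi).2.1]
          by_cases hik : i = k
          · subst hik; simp [hzz, hff]
          · simp [hzz, hff, hik, hi.ne]
        · simp [(hnadj i j hi).2.2.2, hff, haj i hi]
  -- brackets with `e i`, `f i` have no components on edges avoiding `i`
  have avoid : ∀ i (s : G.edgeSet), i ∉ (s : Sym2 (Fin n)) → ∀ y,
      B ⁅e i, y⁆ (z s) = 0 ∧ B ⁅e i, y⁆ (w s) = 0 ∧ B ⁅f i, y⁆ (z s) = 0 := by
    intro i s hs y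
    have hns : ∀ j (h : G.Adj j i), (⟨s(j, i), G.mem_edgeSet.mpr h⟩ : G.edgeSet) ≠ s := by
      intro j h he
      apply hs
      rw [← he]; simp
    have aux : ∀ (v u : V), (∀ j, B ⁅e j, v⁆ u = 0) → (∀ j, B ⁅f j, v⁆ u = 0) →
        B ⁅v, y⁆ u = 0 := by
      intro v u h1 h2
      have := hind ((B.flip u).comp (L v))
        (fun i => by simp [hL, h1]) (fun i => by simp [hL, h2])
        (fun s => by simp [hL, hzc s v]) (fun s => by simp [hL, hwc s v]) y
      rw [← lie_skew, map_neg, LinearMap.neg_apply, neg_eq_zero]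
      exact this
    refine ⟨aux _ _ (fun j => ?_) (fun j => ?_), aux _ _ (fun j => ?_) (fun j => ?_),
      aux _ _ (fun j => ?_) (fun j => ?_)⟩
    all_goals
      by_cases hj : G.Adj j i
      · simp [hbr j i hj, hzz, hww, hzw, hwz, hns j hj]
      · simp [hnadj j i hj]
  have hnb : ∀ k, ∃ j, G.Adj k j := by
    intro k
    have : Nontrivial (Fin n) := Fin.nontrivial_iff_two_le.mpr hn
    exact hconn.preconnected.exists_adj_of_nontrivial k
  have hcen : ∀ i c, IsCentral c → B (e i) c = 0 ∧ B (f i) c = 0 := by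
    intro i c hc
    obtain ⟨j, h⟩ := hnb i
    obtain ⟨h1, h2, -⟩ := key i j h c
    rw [hc] at h1 h2
    rw [hsymm (e i), hsymm (f i)]
    simp only [map_zero, LinearMap.zero_apply] at h1 h2
    exact ⟨(mul_eq_zero.mp h1.symm).resolve_left (hε _ _),
      (mul_eq_zero.mp h2.symm).resolve_left (hε _ _)⟩
  have hev : ∀ i, InVperp B (e i) := fun i c hc => (hcen i c hc).1
  have hfv : ∀ i, InVperp B (f i) := fun i c hc => (hcen i c hc).2
  have hcomm : ∀ x y, InVperp B x → InVperp B y → ⁅T x, y⁆ = ⁅x, T y⁆ := by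
    intro x y hx hy
    have h1 := hTb x y hx hy
    have h2 := hTb y x hy hx
    rw [← lie_skew, map_neg, h1, ← smul_neg] at h2
    have h3 : -⁅T x, y⁆ = ⁅T y, x⁆ := smul_right_injective V (three_ne_zero (α := ℝ)) h2
    rw [← lie_skew x (T y), ← h3, neg_neg]
  have hmain : ∀ i k, i ≠ k → B (T (e i)) (e k) = 0 ∧ B (T (e i)) (f k) = 0 ∧
      B (T (f i)) (f k) = 0 := by
    intro i k hik
    obtain ⟨j, h⟩ := hnb k
    obtain ⟨a1, a2, -⟩ := key k j h (T (e i))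
    obtain ⟨-, -, a3⟩ := key k j h (T (f i))
    have hself : ∀ v, InVperp B v → ⁅T v, v⁆ = 0 := by
      intro v hv
      have h1 := hcomm v v hv hv
      rw [← lie_skew v (T v)] at h1
      have h2 : (2 : ℝ) • ⁅T v, v⁆ = 0 := by
        rw [two_smul]; nth_rewrite 1 [h1]; exact neg_add_cancel _
      exact (smul_eq_zero.mp h2).resolve_left two_ne_zero
    have b : B ⁅T (e i), e j⁆ (z ⟨s(k, j), G.mem_edgeSet.mpr h⟩) = 0 ∧
        B ⁅T (e i), e j⁆ (w ⟨s(k, j), G.mem_edgeSet.mpr h⟩) = 0 ∧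
        B ⁅T (f i), f j⁆ (z ⟨s(k, j), G.mem_edgeSet.mpr h⟩) = 0 := by
      by_cases hij : i = j
      · subst hij
        rw [hself _ (hev i), hself _ (hfv i)]; simp
      · rw [hcomm _ _ (hev i) (hev j), hcomm _ _ (hfv i) (hfv j)]
        have hs : i ∉ ((⟨s(k, j), G.mem_edgeSet.mpr h⟩ : G.edgeSet) : Sym2 (Fin n)) := by
          simp [hik, hij]
        exact ⟨(avoid i _ hs _).1, (avoid i _ hs _).2.1, (avoid i _ hs _).2.2⟩
    obtain ⟨b1, b2, b3⟩ := b
    rw [a1] at b1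
    rw [a2] at b2
    rw [a3, neg_eq_zero] at b3
    exact ⟨(mul_eq_zero.mp b1).resolve_left (hε _ _),
      (mul_eq_zero.mp b2).resolve_left (hε _ _), (mul_eq_zero.mp b3).resolve_left (hε _ _)⟩
  have hfirst : ∀ i k, i ≠ k →
      B (T (e i)) (e k) = 0 ∧ B (T (e i)) (f k) = 0 ∧
      B (T (f i)) (e k) = 0 ∧ B (T (f i)) (f k) = 0 := by
    intro i k hik
    obtain ⟨h1, h2, h3⟩ := hmain i k hik
    refine ⟨h1, h2, ?_, h3⟩
    rw [hskew, hsymm, (hmain k i hik.symm).2.1, neg_zero]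
  refine ⟨hfirst, fun i => ?_⟩
  have hdiag : ∀ x, B (T x) x = 0 := by
    intro x
    have h1 := hskew x x
    rw [hsymm x] at h1
    linarith
  have hzero : ∀ x, (∀ k, B x (e k) = 0) → (∀ k, B x (f k) = 0) →
      (∀ s, B x (z s) = 0) → (∀ s, B x (w s) = 0) → x = 0 := by
    intro x h1 h2 h3 h4
    by_contra hx
    exact (hpos x hx).ne' (hind (B x) h1 h2 h3 h4 x)
  have hTz : ∀ x, InVperp B x → ∀ c, IsCentral c → B (T x) c = 0 := by
    intro x hx c hc
    rw [hskew, hx _ (hTc c hc), neg_zero]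
  have hsw : B (T (f i)) (e i) = - B (T (e i)) (f i) := by
    rw [hskew, hsymm]
  refine ⟨B (T (e i)) (f i), ?_, ?_⟩
  · rw [← sub_eq_zero]
    refine hzero _ (fun k => ?_) (fun k => ?_) (fun s => ?_) (fun s => ?_)
    · by_cases hik : i = k
      · subst hik; simp [hdiag, hfe]
      · simp [hfirst i k hik, hfe]
    · by_cases hik : i = k
      · subst hik; simp [hff]
      · simp [hfirst i k hik, hff, hik]
    · simp [hTz _ (hev i) _ (hzc s), hfz]
    · simp [hTz _ (hev i) _ (hwc s), hfw]
  · rw [← sub_eq_zero]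
    refine hzero _ (fun k => ?_) (fun k => ?_) (fun s => ?_) (fun s => ?_)
    · by_cases hik : i = k
      · subst hik; simp [hee, hsw]
      · simp [hfirst i k hik, hee, hik]
    · by_cases hik : i = k
      · subst hik; simp [hdiag, hef]
      · simp [hfirst i k hik, hef]
    · simp [hTz _ (hfv i) _ (hzc s), hez]
    · simp [hTz _ (hfv i) _ (hwc s), hew]
end

section
/- Let 𝔫 be a 2-step nilpotent finite-dimensional real Lie algebra with inner product ⟨·,·⟩ and let T be a Killing–Yano tensor on (𝔫,⟨·,·⟩). Then ⁅Tx, y⁆ = ⁅x, Ty⁆ for all x, y ∈ 𝔫. -/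
/-- a KY tensor on a 2-step nilpotent metric Lie algebra satisfies
⁅Tx, y⁆ = ⁅x, Ty⁆ for all x, y. -/
theorem statement_19 (V : Type*) [LieRing V] [LieAlgebra ℝ V] [FiniteDimensional ℝ V]
    (B : V →ₗ[ℝ] V →ₗ[ℝ] ℝ)
    (hsymm : ∀ x y : V, B x y = B y x) (hpos : ∀ x : V, x ≠ 0 → 0 < B x x)
    (h2 : TwoStepNilpotent V)
    (T : V →ₗ[ℝ] V) (hT : IsKY B T) :
    ∀ x y : V, ⁅T x, y⁆ = ⁅x, T y⁆ := by
  obtain ⟨-, hc, hk⟩ := hT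
  have hc' : ∀ z : V, IsCentral z → ∀ y : V, ⁅y, z⁆ = 0 := fun z hz y => by
    rw [← lie_skew, hz y, neg_zero]
  have key : ∀ x y : V, InVperp B x → InVperp B y → ⁅T x, y⁆ = ⁅x, T y⁆ := by
    intro x y hx hy
    have h1 := hk x y hx hy
    have h3 := hk y x hy hx
    rw [← lie_skew, map_neg, h1] at h3
    have h4 : (3 : ℝ) • ⁅T x, y⁆ = (3 : ℝ) • ⁅x, T y⁆ := by
      rw [← lie_skew x, smul_neg, ← h3, neg_neg]
    exact smul_right_injective V (by norm_num : (3 : ℝ) ≠ 0) h4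
  let W : Submodule ℝ V :=
    { carrier := {z | IsCentral z}
      zero_mem' := fun y => zero_lie y
      add_mem' := fun {a b} ha hb y => by rw [add_lie, ha y, hb y, add_zero]
      smul_mem' := fun c a ha y => by rw [smul_lie, ha y, smul_zero] }
  have dec : ∀ x : V, ∃ v z : V, InVperp B v ∧ IsCentral z ∧ x = v + z := by
    intro x
    let f : W →ₗ[ℝ] Module.Dual ℝ W := (LinearMap.lcomp ℝ ℝ W.subtype) ∘ₗ B ∘ₗ W.subtype
    have hinj : Function.Injective f := by
      rw [injective_iff_map_eq_zero]
      intro a ha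
      by_contra hne
      have h1 := hpos (a : V) (by simpa using hne)
      have h5 : B (a : V) (a : V) = 0 := LinearMap.congr_fun ha a
      linarith
    have hsur : Function.Surjective f :=
      (LinearMap.injective_iff_surjective_of_finrank_eq_finrank
        (Subspace.dual_finrank_eq).symm).1 hinj
    obtain ⟨w, hw⟩ := hsur ((B x) ∘ₗ W.subtype)
    refine ⟨x - w, w, ?_, w.2, by abel⟩
    intro z hz
    have h6 : B (w : V) z = B x z := LinearMap.congr_fun hw (⟨z, hz⟩ : W)
    rw [map_sub, LinearMap.sub_apply, h6, sub_self]
  intro x y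
  obtain ⟨v, z, hv, hz, rfl⟩ := dec x
  obtain ⟨v', z', hv', hz', rfl⟩ := dec y
  simp only [map_add, add_lie, lie_add, hz _, hc _ hz _, hc' _ hz', hc' _ (hc _ hz'), add_zero]
  exact key v v' hv hv'
end
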